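/- arXiv:2003.08707 — 2 statements merged into one kernel-verified Lean document; each statement's English description precedes it below -/
import Mathlib

section
/- Let N, n, k be natural numbers with N > 3, n ≥ 1, k ≥ 2, let a be an element of ZMod N satisfying a · (1 − a) = 1, let γ : Fin n → ZMod N, and let P^{a,II} be the associated type-II IRS exponent matrix. Then for every cycle (r, c) of length 2k in P^{a,II}, one has θ_{P^{a,II}}(π^{II,1} ∘ r, c) = −a · θ_{P^{a,II}}(r, c) in ZMod N. -/
/-- A cycle of length `2k` in an `m × n` exponent matrix, encoded by index functions
`r : ℕ → Fin m` and `c : ℕ → Fin n` on the positions `0, 1, …, 2k - 1`, with the successor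
of position `s` being `(s + 1) % (2 * k)`: at even positions the row stays and the column
changes, at odd positions the row changes and the column stays. -/
def IsCycle {m n : ℕ} (k : ℕ) (r : ℕ → Fin m) (c : ℕ → Fin n) : Prop :=
  ∀ s < 2 * k,
    (s % 2 = 0 → r s = r ((s + 1) % (2 * k)) ∧ c s ≠ c ((s + 1) % (2 * k))) ∧
    (s % 2 = 1 → r s ≠ r ((s + 1) % (2 * k)) ∧ c s = c ((s + 1) % (2 * k)))

/-- The cycle sum `θ_P(r, c) = ∑_{s = 0}^{2k - 1} (-1)^s P(r(s), c(s))` of a length-`2k`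
cycle in an exponent matrix `P`. -/
def cycleSum {N m n : ℕ} (k : ℕ) (P : Fin m → Fin n → ZMod N)
    (r : ℕ → Fin m) (c : ℕ → Fin n) : ZMod N :=
  ∑ s ∈ Finset.range (2 * k), (-1 : ZMod N) ^ s * P (r s) (c s)

/-- The row permutation `π^{II,1} : Fin 3 → Fin 3`, `i ↦ (i + 2) mod 3`. -/
def piII : Fin 3 → Fin 3 := fun i => ⟨((i : ℕ) + 2) % 3, by omega⟩

/-!
Shifting the rows of a type-II matrix by `piII` acts on column `j` as the affine map
`x ↦ -a * x + a * γ j`; on the row `a * γ` this is the relation `a * (1 - a) = 1`. The translation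
part depends only on the column, and along a cycle the columns of each odd position and its
successor agree while their signs are opposite, so the alternating sum only sees the linear part
`-a`.
-/

section AlternatingSum

variable {R : Type*} [Ring R]

theorem sum_range_two_mul_neg_one_pow_mul (g : ℕ → R) (k : ℕ) :
    ∑ s ∈ Finset.range (2 * k), (-1) ^ s * g s =
      ∑ i ∈ Finset.range k, (g (2 * i) - g (2 * i + 1)) := by
  induction k with
  | zero => simp
  | succ k ih =>
    rw [Nat.mul_succ, Finset.sum_range_succ, Finset.sum_range_succ, ih, Finset.sum_range_succ,
      (even_two_mul k).neg_one_pow, (odd_two_mul_add_one k).neg_one_pow]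
    noncomm_ring

theorem sum_neg_one_pow_mul_eq_zero_of_odd_eq_succ {k : ℕ} {g : ℕ → R}
    (hg : ∀ s < 2 * k, s % 2 = 1 → g s = g ((s + 1) % (2 * k))) :
    ∑ s ∈ Finset.range (2 * k), (-1) ^ s * g s = 0 := by
  have pair_eq : ∀ i ∈ Finset.range k,
      g (2 * i) - g (2 * i + 1) = g (2 * i % (2 * k)) - g (2 * (i + 1) % (2 * k)) := by
    intro i hi
    have hik : i < k := Finset.mem_range.mp hi
    rw [hg (2 * i + 1) (by lia) (by lia), Nat.mod_eq_of_lt (by lia : 2 * i < 2 * k), mul_add_one]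
  calc
    ∑ s ∈ Finset.range (2 * k), (-1) ^ s * g s
        = ∑ i ∈ Finset.range k, (g (2 * i) - g (2 * i + 1)) :=
      sum_range_two_mul_neg_one_pow_mul g k
    _ = ∑ i ∈ Finset.range k, (g (2 * i % (2 * k)) - g (2 * (i + 1) % (2 * k))) :=
      Finset.sum_congr rfl pair_eq
    _ = g (2 * 0 % (2 * k)) - g (2 * k % (2 * k)) :=
      Finset.sum_range_sub' (fun i => g (2 * i % (2 * k))) k
    _ = 0 := by simp

theorem sum_neg_one_pow_mul_eq_mul_sum_of_affine {u : R} {x y d : ℕ → R} {k : ℕ}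
    (hy : ∀ s < 2 * k, y s = u * x s + d s)
    (hd : ∀ s < 2 * k, s % 2 = 1 → d s = d ((s + 1) % (2 * k))) :
    ∑ s ∈ Finset.range (2 * k), (-1) ^ s * y s =
      u * ∑ s ∈ Finset.range (2 * k), (-1) ^ s * x s := by
  have term_eq : ∀ s ∈ Finset.range (2 * k),
      (-1) ^ s * y s = u * ((-1) ^ s * x s) + (-1) ^ s * d s := by
    intro s hs
    rw [hy s (Finset.mem_range.mp hs), mul_add, ((Commute.neg_one_left u).pow_left s).left_comm]
  rw [Finset.sum_congr rfl term_eq, Finset.sum_add_distrib, ← Finset.mul_sum,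
    sum_neg_one_pow_mul_eq_zero_of_odd_eq_succ hd, add_zero]

end AlternatingSum

section TypeII

variable {R ι : Type*} [Ring R]

/-- The type-II exponent matrix `P^{a,II}` with coefficients `γ`, over an arbitrary ring in place
of `ZMod N` and with columns indexed by an arbitrary type. -/
def typeIIMatrix (a : R) (γ : ι → R) : Fin 3 → ι → R :=
  ![fun _ => 0, γ, fun j => a * γ j]

theorem eq_typeIIMatrix {a : R} {γ : ι → R} {P : Fin 3 → ι → R}
    (hP : ∀ j, P 0 j = 0 ∧ P 1 j = γ j ∧ P 2 j = a * γ j) : P = typeIIMatrix a γ := by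
  funext i j
  match i with
  | 0 => exact (hP j).1
  | 1 => exact (hP j).2.1
  | 2 => exact (hP j).2.2

theorem typeIIMatrix_piII {a : R} (ha : a * (1 - a) = 1) (γ : ι → R) (i : Fin 3) (j : ι) :
    typeIIMatrix a γ (piII i) j = -a * typeIIMatrix a γ i j + a * γ j := by
  match i with
  | 0 =>
    change a * γ j = -a * 0 + a * γ j
    rw [mul_zero, zero_add]
  | 1 =>
    change 0 = -a * γ j + a * γ j
    rw [neg_mul, neg_add_cancel]
  | 2 =>
    change γ j = -a * (a * γ j) + a * γ j
    calc
      γ j = a * (1 - a) * γ j := by rw [ha, one_mul]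
      _ = -a * (a * γ j) + a * γ j := by noncomm_ring

theorem typeII_cycleSum_perm_eq_neg_mul_general {a : R} (ha : a * (1 - a) = 1) (γ : ι → R)
    {k : ℕ} (r : ℕ → Fin 3) {c : ℕ → ι}
    (hc : ∀ s < 2 * k, s % 2 = 1 → c s = c ((s + 1) % (2 * k))) :
    ∑ s ∈ Finset.range (2 * k), (-1) ^ s * typeIIMatrix a γ (piII (r s)) (c s) =
      -a * ∑ s ∈ Finset.range (2 * k), (-1) ^ s * typeIIMatrix a γ (r s) (c s) :=
  sum_neg_one_pow_mul_eq_mul_sum_of_affine (d := fun s => a * γ (c s))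
    (fun s _ => typeIIMatrix_piII ha γ (r s) (c s))
    (fun s hs hodd => congrArg (fun j => a * γ j) (hc s hs hodd))

end TypeII

/-- For a type-II IRS exponent matrix `P^{a,II}` (built from `a : ZMod N`, `N > 3`,
satisfying `a * (1 - a) = 1`, and coefficients `γ`) and any cycle `(r, c)` of length `2k`,
the cycle sum of the row-permuted cycle `(π^{II,1} ∘ r, c)` equals `-a` times the cycle
sum of `(r, c)`. -/
theorem typeII_cycleSum_perm_eq_neg_mul (N n k : ℕ) (hN : 3 < N) (hn : 1 ≤ n) (hk : 2 ≤ k)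
    (a : ZMod N) (ha : a * (1 - a) = 1)
    (γ : Fin n → ZMod N) (P : Fin 3 → Fin n → ZMod N)
    (hP : ∀ j : Fin n, P 0 j = 0 ∧ P 1 j = γ j ∧ P 2 j = a * γ j)
    (r : ℕ → Fin 3) (c : ℕ → Fin n) (hcyc : IsCycle k r c) :
    cycleSum k P (fun s => piII (r s)) c = -a * cycleSum k P r c := by
  obtain rfl : P = typeIIMatrix a γ := eq_typeIIMatrix hP
  exact typeII_cycleSum_perm_eq_neg_mul_general ha γ r fun s hs hodd => ((hcyc s hs).2 hodd).2
end

section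
/- Let N be a natural number with N > 3 and let a, b be elements of ZMod N with a ≠ b, a · (1 − a) = 1, b · (1 − b) = 1, and such that the submonoid of ZMod N generated by a equals the submonoid generated by b. Define v_a, v_b : Fin 3 → ZMod N by v_x(0) = 0, v_x(1) = 1, v_x(2) = x. Then there exists a bijection σ : Fin 3 ≃ Fin 3 with σ(0) = 0 such that v_b(i) = a⁵ · v_a(σ(i)) for all i in Fin 3 (Proposition 3: the second column of the type-II matrix built from b is a unit multiple of a row permutation of the second column built from a). -/
/-!
The type-II condition says `a ^ 2 = a - 1`, whence `a ^ 3 = -1` and `a ^ 6 = 1`. Everything else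
happens in the monoid `powers a`: it is a finite cyclic group of order dividing `6`, and such a
group has no generators other than `a` and `a⁻¹ = a ^ 5`. So `b = a ^ 5`, and multiplication by
`a ^ 5` sends `(0, a, 1)` to `(0, a ^ 6, a ^ 5) = (0, 1, b)`: the permutation swaps the last two
rows.
-/

lemma modEq_one_or_modEq_five_of_dvd_six_of_coprime {n k : ℕ} (hn : n ∣ 6)
    (hk : n.Coprime k) : k ≡ 1 [MOD n] ∨ k ≡ 5 [MOD n] := by
  have residues : ∀ m ∈ Nat.divisors 6, ∀ r < m, m.Coprime r → r ≡ 1 [MOD m] ∨ r ≡ 5 [MOD m] := by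
    decide
  have hmod : k % n ≡ k [MOD n] := Nat.mod_modEq k n
  have hcop : n.Coprime (k % n) := Nat.Coprime.symm (hmod.gcd_eq.trans hk.symm)
  have hlt : k % n < n := Nat.mod_lt k (Nat.pos_of_dvd_of_pos hn (by norm_num))
  exact (residues n (by simp [hn]) _ hlt hcop).imp hmod.symm.trans hmod.symm.trans

section Monoid

variable {M : Type*} [Monoid M] {a b : M}

lemma exists_coprime_pow_eq_of_powers_eq (ha : IsOfFinOrder a)
    (h : Submonoid.powers a = Submonoid.powers b) :
    ∃ k : ℕ, (orderOf a).Coprime k ∧ a ^ k = b := by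
  obtain ⟨k, rfl⟩ : b ∈ Submonoid.powers a := h ▸ Submonoid.mem_powers b
  obtain ⟨l, hl : (a ^ k) ^ l = a⟩ : a ∈ Submonoid.powers (a ^ k) := h ▸ Submonoid.mem_powers a
  have hkl : k * l ≡ 1 [MOD orderOf a] := by
    rw [← ha.pow_eq_pow_iff_modEq, pow_mul, hl, pow_one]
  exact ⟨k, (Nat.coprime_of_mul_modEq_one l hkl).symm, rfl⟩

lemma eq_or_eq_pow_five_of_powers_eq (ha : a ^ 6 = 1)
    (h : Submonoid.powers a = Submonoid.powers b) : b = a ∨ b = a ^ 5 := by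
  have hfin : IsOfFinOrder a := isOfFinOrder_iff_pow_eq_one.mpr ⟨6, by norm_num, ha⟩
  obtain ⟨k, hk, rfl⟩ := exists_coprime_pow_eq_of_powers_eq hfin h
  have hdvd : orderOf a ∣ 6 := orderOf_dvd_of_pow_eq_one ha
  rcases modEq_one_or_modEq_five_of_dvd_six_of_coprime hdvd hk with hk | hk
  · exact .inl <| (pow_eq_pow_of_modEq hk (pow_orderOf_eq_one a)).trans (pow_one a)
  · exact .inr <| pow_eq_pow_of_modEq hk (pow_orderOf_eq_one a)

end Monoid

section Ring

variable {R : Type*} [Ring R] {a : R}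

lemma pow_three_eq_neg_one_of_mul_one_sub_eq_one (ha : a * (1 - a) = 1) : a ^ 3 = -1 := by
  have sq_eq : a ^ 2 = a - 1 := by
    calc a ^ 2 = a - a * (1 - a) := by noncomm_ring
      _ = a - 1 := by rw [ha]
  calc a ^ 3 = a * a ^ 2 := pow_succ' a 2
    _ = -(a * (1 - a)) := by rw [sq_eq, ← neg_sub, mul_neg]
    _ = -1 := by rw [ha]

lemma pow_six_eq_one_of_mul_one_sub_eq_one (ha : a * (1 - a) = 1) : a ^ 6 = 1 := by
  rw [pow_mul a 3 2, pow_three_eq_neg_one_of_mul_one_sub_eq_one ha, neg_one_sq]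

end Ring

theorem typeII_second_columns_perm_general {M : Type*} [MonoidWithZero M] {a b : M} (hab : a ≠ b)
    (ha : a ^ 6 = 1) (hgen : Submonoid.powers a = Submonoid.powers b) {va vb : Fin 3 → M}
    (hva0 : va 0 = 0) (hva1 : va 1 = 1) (hva2 : va 2 = a)
    (hvb0 : vb 0 = 0) (hvb1 : vb 1 = 1) (hvb2 : vb 2 = b) :
    ∃ σ : Fin 3 ≃ Fin 3, σ 0 = 0 ∧ ∀ i : Fin 3, vb i = a ^ 5 * va (σ i) := by
  have hb : b = a ^ 5 := (eq_or_eq_pow_five_of_powers_eq ha hgen).resolve_left hab.symm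
  have swap_zero : Equiv.swap (1 : Fin 3) 2 0 = 0 := by decide
  refine ⟨Equiv.swap 1 2, swap_zero, fun i => ?_⟩
  match i with
  | 0 => rw [swap_zero, hva0, hvb0, mul_zero]
  | 1 => rw [Equiv.swap_apply_left, hva2, hvb1, ← pow_succ, ha]
  | 2 => rw [Equiv.swap_apply_right, hva1, hvb2, mul_one, hb]

/-- Proposition 3: let `N > 3` and let `a ≠ b` be elements of `ZMod N` both satisfying the
type-II condition `x * (1 - x) = 1` and generating the same submonoid of `ZMod N`. Then the
type-II second column `v_b = (0, 1, b)` equals `a ^ 5` times a row permutation (fixing row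
`0`) of the type-II second column `v_a = (0, 1, a)`. -/
theorem typeII_second_columns_perm (N : ℕ) (hN : 3 < N) (a b : ZMod N) (hab : a ≠ b)
    (ha : a * (1 - a) = 1) (hb : b * (1 - b) = 1)
    (hgen : Submonoid.powers a = Submonoid.powers b)
    (va vb : Fin 3 → ZMod N)
    (hva0 : va 0 = 0) (hva1 : va 1 = 1) (hva2 : va 2 = a)
    (hvb0 : vb 0 = 0) (hvb1 : vb 1 = 1) (hvb2 : vb 2 = b) :
    ∃ σ : Fin 3 ≃ Fin 3, σ 0 = 0 ∧ ∀ i : Fin 3, vb i = a ^ 5 * va (σ i) :=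
  typeII_second_columns_perm_general hab (pow_six_eq_one_of_mul_one_sub_eq_one ha) hgen hva0
    hva1 hva2 hvb0 hvb1 hvb2
end
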